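/- A connected bridgeless multigraph G is 3-edge-connected (i.e., the removal of any set of at most two edges leaves G connected) if and only if every C1-set of G has cardinality 1. -/

import Mathlib

/-- A finite multigraph: finite vertex and edge types, each edge carrying a source and a
target vertex (this is an auxiliary orientation); loops and parallel edges are allowed. -/
structure Multigraph where
  V : Type
  E : Type
  [fV : Fintype V]
  [fE : Fintype E]
  [dV : DecidableEq V]
  [dE : DecidableEq E]
  s : E → V
  t : E → V

attribute [instance] Multigraph.fV Multigraph.fE Multigraph.dV Multigraph.dE

namespace Multigraph

variable (G : Multigraph)

/-- Two vertices are adjacent if some edge joins them. -/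
def Adj (a b : G.V) : Prop :=
  ∃ e : G.E, (G.s e = a ∧ G.t e = b) ∨ (G.s e = b ∧ G.t e = a)

/-- A multigraph is connected if it is nonempty and any two vertices are joined by a walk. -/
def Connected : Prop :=
  Nonempty G.V ∧ ∀ a b : G.V, Relation.ReflTransGen G.Adj a b

/-- The graph obtained by deleting the edges in `F` is connected. -/
def ConnectedAvoiding (F : Set G.E) : Prop :=
  ∀ a b : G.V, Relation.ReflTransGen
    (fun x y => ∃ e : G.E, e ∉ F ∧ ((G.s e = x ∧ G.t e = y) ∨ (G.s e = y ∧ G.t e = x))) a b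

/-- The valency of a vertex: the number of half-edges at it (a loop counts twice). -/
def val (v : G.V) : ℕ :=
  (Finset.univ.filter (fun e => G.s e = v)).card + (Finset.univ.filter (fun e => G.t e = v)).card

/-- The number of loops based at a vertex. -/
def loops (v : G.V) : ℕ :=
  (Finset.univ.filter (fun e => G.s e = v ∧ G.t e = v)).card

/-- The number of edges joining two vertices. -/
def edgesBetween (v w : G.V) : ℕ :=
  (Finset.univ.filter (fun e => (G.s e = v ∧ G.t e = w) ∨ (G.s e = w ∧ G.t e = v))).card

/-- The first Betti number `b₁(G) = |E| - |V| + 1` (of a connected graph). -/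
def b1 : ℤ := (Fintype.card G.E : ℤ) - (Fintype.card G.V : ℤ) + 1

/-- The boundary map `∂ : C₁(G,ℤ) → C₀(G,ℤ)`, sending an edge `e` to `t e - s e`. -/
def boundaryHom : (G.E → ℤ) →+ (G.V → ℤ) where
  toFun c := fun v =>
    ∑ e : G.E, c e * ((if G.t e = v then 1 else 0) - (if G.s e = v then 1 else 0))
  map_zero' := by funext v; simp
  map_add' a b := by
    funext v
    simp [Pi.add_apply, add_mul, Finset.sum_add_distrib]

/-- The coboundary map `δ : C₀(G,ℤ) → C₁(G,ℤ)`. -/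
def coboundaryHom : (G.V → ℤ) →+ (G.E → ℤ) where
  toFun f := fun e => f (G.t e) - f (G.s e)
  map_zero' := by funext e; simp
  map_add' a b := by funext e; simp only [Pi.add_apply]; ring

/-- The cycle space `H₁(G,ℤ)`, i.e. the kernel of the boundary map. -/
def cycleSpace : AddSubgroup (G.E → ℤ) := (G.boundaryHom).ker

/-- `C` is the edge set of a closed walk with no repeated vertices except the
initial/terminal one (so a loop is a cycle). -/
def IsCycle (C : Finset G.E) : Prop :=
  ∃ n : ℕ, 0 < n ∧ ∃ (e : Fin n → G.E) (v : Fin (n + 1) → G.V),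
    Function.Injective e ∧
    (∀ i : Fin n, (G.s (e i) = v i.castSucc ∧ G.t (e i) = v i.succ) ∨
        (G.s (e i) = v i.succ ∧ G.t (e i) = v i.castSucc)) ∧
    v 0 = v (Fin.last n) ∧
    (∀ i j : Fin (n + 1), v i = v j →
        i = j ∨ (i = 0 ∧ j = Fin.last n) ∨ (i = Fin.last n ∧ j = 0)) ∧
    C = Finset.image e Finset.univ

/-- A bridge (separating edge) is an edge contained in no cycle. -/
def IsBridge (e : G.E) : Prop := ∀ C : Finset G.E, G.IsCycle C → e ∉ C

def Bridgeless : Prop := ∀ e : G.E, ¬ G.IsBridge e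

/-- `e₁ ∼ e₂` iff every cycle containing `e₁` contains `e₂` and conversely. -/
def Sim (e₁ e₂ : G.E) : Prop :=
  ∀ C : Finset G.E, G.IsCycle C → (e₁ ∈ C ↔ e₂ ∈ C)

/-- The C1-sets: the equivalence classes of the relation `Sim`. -/
def IsC1Set (S : Set G.E) : Prop := ∃ e : G.E, S = {e' | G.Sim e e'}

/-- The multigraph obtained by contracting every edge in `F` (a contracted loop is
simply deleted). -/
noncomputable def contractSet (F : Set G.E) : Multigraph :=
  letI : DecidableEq (Quot (fun a b : G.V => ∃ e ∈ F, G.s e = a ∧ G.t e = b)) :=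
    Classical.decEq _
  { V := Quot (fun a b : G.V => ∃ e ∈ F, G.s e = a ∧ G.t e = b)
    E := {e : G.E // e ∉ F}
    fV := Fintype.ofSurjective (Quot.mk _) (fun q => Quot.exists_rep q)
    fE := Fintype.ofInjective (Subtype.val) Subtype.val_injective
    dV := inferInstance
    dE := inferInstance
    s := fun e => Quot.mk _ (G.s e.1)
    t := fun e => Quot.mk _ (G.t e.1) }

/-- `G^(2)`: the multigraph obtained from `G` by contracting every bridge. -/
noncomputable def contractBridges : Multigraph := G.contractSet {e | G.IsBridge e}

/-- An isomorphism of multigraphs. -/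
structure Iso (G₁ G₂ : Multigraph) where
  vEquiv : G₁.V ≃ G₂.V
  eEquiv : G₁.E ≃ G₂.E
  endpoints : ∀ e : G₁.E,
    (G₂.s (eEquiv e) = vEquiv (G₁.s e) ∧ G₂.t (eEquiv e) = vEquiv (G₁.t e)) ∨
    (G₂.s (eEquiv e) = vEquiv (G₁.t e) ∧ G₂.t (eEquiv e) = vEquiv (G₁.s e))

/-- The group of degree-zero divisors `Div⁰(G)`. -/
def Div0 : AddSubgroup (G.V → ℤ) where
  carrier := {D : G.V → ℤ | ∑ v : G.V, D v = 0}
  zero_mem' := by simp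
  add_mem' := by
    intro a b ha hb
    simp only [Set.mem_setOf_eq, Pi.add_apply] at *
    simp [Finset.sum_add_distrib, ha, hb]
  neg_mem' := by
    intro a ha
    simp only [Set.mem_setOf_eq, Pi.neg_apply] at *
    simp [ha]

/-- The principal divisor `div(f_v)` associated to a vertex `v`. -/
def prinDiv (v : G.V) : G.V → ℤ :=
  fun u => if u = v then 2 * (G.loops v : ℤ) - (G.val v : ℤ) else (G.edgesBetween v u : ℤ)

/-- The group of principal divisors `Prin(G)`. -/
def Prin : AddSubgroup (G.V → ℤ) := AddSubgroup.closure (Set.range G.prinDiv)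

end Multigraph

/-- `Jac(G₁) ≅ Jac(G₂)`: a ℤ-linear isomorphism of the cycle lattices preserving the
bilinear forms for which the edges are orthonormal. -/
def JacIsoGraph (G₁ G₂ : Multigraph) : Prop :=
  ∃ φ : G₁.cycleSpace ≃+ G₂.cycleSpace,
    ∀ x y : G₁.cycleSpace,
      (∑ e : G₂.E, ((φ x : G₂.E → ℤ) e) * ((φ y : G₂.E → ℤ) e)) =
      ∑ e : G₁.E, ((x : G₁.E → ℤ) e) * ((y : G₁.E → ℤ) e)

/-- Cyclic equivalence of two multigraphs: a bijection of the edge sets, together with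
signs, inducing an isomorphism of the cycle spaces. -/
def CyclicallyEquivalent (G₁ G₂ : Multigraph) : Prop :=
  ∃ (σ : G₁.E ≃ G₂.E) (ε : G₁.E → ℤ),
    (∀ e, ε e = 1 ∨ ε e = -1) ∧
    ((fun x : G₁.E → ℤ => fun e₂ : G₂.E => ε (σ.symm e₂) * x (σ.symm e₂)) ''
        (G₁.cycleSpace : Set (G₁.E → ℤ))) = (G₂.cycleSpace : Set (G₂.E → ℤ))

/-- Cyclic equivalence of metric graphs: as for graphs, with a length-preserving bijection
of the edge sets. -/
def MetricCycEquiv (G₁ : Multigraph) (ℓ₁ : G₁.E → ℝ) (G₂ : Multigraph) (ℓ₂ : G₂.E → ℝ) : Prop :=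
  ∃ (σ : G₁.E ≃ G₂.E) (ε : G₁.E → ℤ),
    (∀ e, ℓ₂ (σ e) = ℓ₁ e) ∧
    (∀ e, ε e = 1 ∨ ε e = -1) ∧
    ((fun x : G₁.E → ℤ => fun e₂ : G₂.E => ε (σ.symm e₂) * x (σ.symm e₂)) ''
        (G₁.cycleSpace : Set (G₁.E → ℤ))) = (G₂.cycleSpace : Set (G₂.E → ℤ))

/-- `c` chooses one representative edge in each C1-set (i.e. in each `Sim`-class). -/
def IsC1Choice (H : Multigraph) (c : H.E → H.E) : Prop :=
  (∀ e, H.Sim e (c e)) ∧ ∀ e e' : H.E, H.Sim e e' → c e = c e'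

/-- The graph `G^(3)` obtained by contracting, in each C1-set, all edges except the
chosen one. -/
noncomputable def threeGraph (H : Multigraph) (c : H.E → H.E) : Multigraph :=
  H.contractSet {e | c e ≠ e}

/-- The length function on `G^(3)`: a surviving edge gets the total length of its C1-set. -/
noncomputable def threeLength (H : Multigraph) (ℓ : H.E → ℝ) (c : H.E → H.E) :
    (threeGraph H c).E → ℝ :=
  fun e => ∑ e' ∈ Finset.univ.filter (fun e' => c e' = e.1), ℓ e'

/-- A weighted graph: a multigraph with a weight function on the vertices. -/
structure WeightedGraph where
  G : Multigraph
  w : G.V → ℕ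

namespace WeightedGraph

/-- The genus `g(G,w) = b₁(G) + Σ_v w(v)`. -/
def genus (X : WeightedGraph) : ℤ := X.G.b1 + ∑ v : X.G.V, (X.w v : ℤ)

/-- A weighted graph is stable if it is connected, has genus at least 2, and every
vertex of weight zero has valency at least 3. -/
def Stable (X : WeightedGraph) : Prop :=
  X.G.Connected ∧ 2 ≤ X.genus ∧ ∀ v : X.G.V, X.w v = 0 → 3 ≤ X.G.val v

/-- An isomorphism of weighted graphs. -/
structure Iso (X Y : WeightedGraph) where
  vEquiv : X.G.V ≃ Y.G.V
  eEquiv : X.G.E ≃ Y.G.E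
  endpoints : ∀ e : X.G.E,
    (Y.G.s (eEquiv e) = vEquiv (X.G.s e) ∧ Y.G.t (eEquiv e) = vEquiv (X.G.t e)) ∨
    (Y.G.s (eEquiv e) = vEquiv (X.G.t e) ∧ Y.G.t (eEquiv e) = vEquiv (X.G.s e))
  weight_eq : ∀ v : X.G.V, Y.w (vEquiv v) = X.w v

/-- Contraction of a single edge of a weighted graph: a non-loop edge is contracted by
identifying its two endpoints, the new vertex receiving the sum of the two weights;
a loop is deleted, the weight of its base vertex increasing by 1. -/
noncomputable def contract (X : WeightedGraph) (e₀ : X.G.E) : WeightedGraph :=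
  letI : DecidableEq (Quot (fun a b : X.G.V => a = X.G.s e₀ ∧ b = X.G.t e₀)) :=
    Classical.decEq _
  { G := { V := Quot (fun a b : X.G.V => a = X.G.s e₀ ∧ b = X.G.t e₀)
           E := {e : X.G.E // e ≠ e₀}
           fV := Fintype.ofSurjective (Quot.mk _) (fun q => Quot.exists_rep q)
           fE := inferInstance
           dV := inferInstance
           dE := inferInstance
           s := fun e => Quot.mk _ (X.G.s e.1)
           t := fun e => Quot.mk _ (X.G.t e.1) }
    w := fun q =>
      (∑ v ∈ Finset.univ.filter
          (fun v => Quot.mk (fun a b : X.G.V => a = X.G.s e₀ ∧ b = X.G.t e₀) v = q), X.w v) +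
      (if X.G.s e₀ = X.G.t e₀ ∧
          Quot.mk (fun a b : X.G.V => a = X.G.s e₀ ∧ b = X.G.t e₀) (X.G.s e₀) = q
       then 1 else 0) }

/-- One step: `Y` is (isomorphic to) the contraction of a single edge of `X`. -/
def ContractStep (X Y : WeightedGraph) : Prop :=
  ∃ e : X.G.E, Nonempty ((X.contract e).Iso Y)

/-- `X.ContractsTo Y`: `Y` is obtained from `X` by contracting finitely many edges. -/
def ContractsTo : WeightedGraph → WeightedGraph → Prop :=
  Relation.ReflTransGen ContractStep

/-- A sequence of exactly `n` loop contractions from `X` ending at (a graph isomorphic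
to) `Y`. -/
def LoopContractSeq : ℕ → WeightedGraph → WeightedGraph → Prop
  | 0, X, Y => Nonempty (X.Iso Y)
  | n + 1, X, Y => ∃ e : X.G.E, X.G.s e = X.G.t e ∧ LoopContractSeq n (X.contract e) Y

/-- The weightless graph `G''` obtained by replacing each vertex `v` of positive weight
with a weight-zero vertex carrying `w v` new loops. -/
def blowUp (X : WeightedGraph) : WeightedGraph where
  G := { V := X.G.V
         E := X.G.E ⊕ (Σ v : X.G.V, Fin (X.w v))
         fV := inferInstance
         fE := inferInstance
         dV := inferInstance
         dE := inferInstance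
         s := Sum.elim X.G.s (fun p => p.1)
         t := Sum.elim X.G.t (fun p => p.1) }
  w := fun _ => 0

def totalWeight (X : WeightedGraph) : ℕ := ∑ v : X.G.V, X.w v

/-- The lattice `Λ = H₁(G,ℤ) ⊕ ℤ^(g - b₁(G))` underlying the Jacobian torus of a
weighted graph. -/
abbrev JacLattice (X : WeightedGraph) : Type :=
  ↥X.G.cycleSpace × (Fin X.totalWeight → ℤ)

/-- The bilinear form on the Jacobian lattice: on `H₁(G,ℤ)` the edges are orthonormal,
and the form vanishes on the extra summand. -/
def jacForm (X : WeightedGraph) (p q : X.JacLattice) : ℤ :=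
  ∑ e : X.G.E, (p.1 : X.G.E → ℤ) e * (q.1 : X.G.E → ℤ) e

end WeightedGraph

/-- A pure tropical curve: a multigraph with positive edge lengths. -/
structure PureTropicalCurve where
  G : Multigraph
  ℓ : G.E → ℝ
  pos : ∀ e, 0 < ℓ e

/-- A (weighted) tropical curve: a multigraph with vertex weights and positive edge
lengths. -/
structure TropicalCurve where
  G : Multigraph
  w : G.V → ℕ
  ℓ : G.E → ℝ
  pos : ∀ e, 0 < ℓ e

namespace TropicalCurve

def totalWeight (Γ : TropicalCurve) : ℕ := ∑ v : Γ.G.V, Γ.w v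

/-- The lattice `Λ = H₁(G,ℤ) ⊕ ℤ^(g - b₁(G))` underlying `Jac(Γ)`. -/
abbrev JacLattice (Γ : TropicalCurve) : Type :=
  ↥Γ.G.cycleSpace × (Fin Γ.totalWeight → ℤ)

/-- The bilinear form `( , )_ℓ` on the Jacobian lattice, vanishing on the extra
summand. -/
noncomputable def jacForm (Γ : TropicalCurve) (p q : Γ.JacLattice) : ℝ :=
  ∑ e : Γ.G.E, Γ.ℓ e * ((p.1 : Γ.G.E → ℤ) e : ℝ) * ((q.1 : Γ.G.E → ℤ) e : ℝ)

end TropicalCurve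

/-- `Jac(Γ₁) ≅ Jac(Γ₂)`: a ℤ-linear isomorphism of the lattices preserving the bilinear
forms. -/
def TropJacIso (Γ₁ Γ₂ : TropicalCurve) : Prop :=
  ∃ φ : Γ₁.JacLattice ≃+ Γ₂.JacLattice,
    ∀ p q : Γ₁.JacLattice, Γ₂.jacForm (φ p) (φ q) = Γ₁.jacForm p q

/-!
Deleting a set `F` of edges leaves the ends of `e ∈ F` joined exactly when some cycle meets `F` in
`e` alone: such a cycle, cut at `e`, is a path between the ends of `e`, and conversely. Taking
`F = {e, f}` with `e ≠ f`, this turns a cycle that separates `e` from `f` into a way around `e`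
avoiding `f`. Since `f` is not a bridge, its ends are joined in `G - f`, hence also in `G - {e, f}`
by rerouting around `e`. So in a connected bridgeless graph the pair `{e, f}` is a cut exactly
when `e ∼ f`.
-/

section ClosedSequence

open Fin Relation

variable {α : Type*} {r : α → α → Prop} {n : ℕ} {v : Fin (n + 1) → α}

theorem reflTransGen_of_forall_castSucc_succ {a b : Fin (n + 1)} (hab : a ≤ b)
    (h : ∀ i : Fin n, a ≤ i.castSucc → i.castSucc < b → r (v i.castSucc) (v i.succ)) :
    ReflTransGen r (v a) (v b) := by
  induction b using Fin.induction with
  | zero => rw [Fin.le_zero_iff.1 hab]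
  | succ j ih =>
    obtain rfl | hlt := hab.eq_or_lt
    · exact .refl
    · have haj : a ≤ j.castSucc := Fin.le_castSucc_iff.2 hlt
      exact (ih haj fun i hai hij => h i hai (hij.trans castSucc_lt_succ)).tail
        (h j haj castSucc_lt_succ)

theorem reflTransGen_succ_castSucc_of_closed (hclosed : v 0 = v (last n)) {i : Fin n}
    (h : ∀ j ≠ i, r (v j.castSucc) (v j.succ)) :
    ReflTransGen r (v i.succ) (v i.castSucc) := by
  have hafter : ReflTransGen r (v i.succ) (v (last n)) :=
    reflTransGen_of_forall_castSucc_succ (le_last _) fun j hij _ =>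
      h j (succ_le_castSucc_iff.1 hij).ne'
  have hbefore : ReflTransGen r (v 0) (v i.castSucc) :=
    reflTransGen_of_forall_castSucc_succ (zero_le _) fun j _ hji =>
      h j (castSucc_lt_castSucc_iff.1 hji).ne
  exact hafter.trans (hclosed ▸ hbefore)

end ClosedSequence

namespace Multigraph

open Fin Function Relation

section Definitions

variable (G : Multigraph)

/-- The edge `e`, with its orientation forgotten, has ends `x` and `y`. -/
def Joins (e : G.E) (x y : G.V) : Prop :=
  (G.s e = x ∧ G.t e = y) ∨ (G.s e = y ∧ G.t e = x)

/-- Adjacency in the graph obtained by deleting the edges in `F`, spelled so that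
`G.ConnectedAvoiding F` unfolds to the reflexive transitive closure of it. -/
def AdjAvoiding (F : Set G.E) (x y : G.V) : Prop := ∃ e ∉ F, G.Joins e x y

/-- Being joined by a walk in the graph obtained by deleting the edges in `F`. -/
abbrev ReachableAvoiding (F : Set G.E) : G.V → G.V → Prop := ReflTransGen (G.AdjAvoiding F)

/-- The edges `c 0, …, c (n - 1)` form a path through the distinct vertices `v 0, …, v n`. The
indexing is that of `IsCycle`. -/
def IsPath {n : ℕ} (c : Fin n → G.E) (v : Fin (n + 1) → G.V) : Prop :=
  Injective v ∧ ∀ i, G.Joins (c i) (v i.castSucc) (v i.succ)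

end Definitions

variable {G : Multigraph} {F F' : Set G.E} {e f : G.E} {x y : G.V}

theorem joins_s_t (e : G.E) : G.Joins e (G.s e) (G.t e) := .inl ⟨rfl, rfl⟩

theorem Joins.sym2_eq {x' y' : G.V} (h : G.Joins e x y) (h' : G.Joins e x' y') :
    s(x, y) = s(x', y') := by
  obtain ⟨rfl, rfl⟩ | ⟨rfl, rfl⟩ := h <;> obtain ⟨rfl, rfl⟩ | ⟨rfl, rfl⟩ := h' <;> simp

theorem Joins.symm (h : G.Joins e x y) : G.Joins e y x := Or.symm h

instance : Std.Symm (G.AdjAvoiding F) := ⟨fun _ _ ⟨e, he, h⟩ => ⟨e, he, h.symm⟩⟩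

theorem ReachableAvoiding.symm (h : G.ReachableAvoiding F x y) : G.ReachableAvoiding F y x :=
  Std.Symm.symm (r := G.ReachableAvoiding F) _ _ h

theorem Joins.reachableAvoiding_iff (h : G.Joins e x y) :
    G.ReachableAvoiding F (G.s e) (G.t e) ↔ G.ReachableAvoiding F x y := by
  obtain ⟨rfl, rfl⟩ | ⟨rfl, rfl⟩ := h
  · rfl
  · exact ⟨.symm, .symm⟩

theorem ReachableAvoiding.of_forall_mem_diff (h : G.ReachableAvoiding F x y)
    (hF' : ∀ e ∈ F' \ F, G.ReachableAvoiding F' (G.s e) (G.t e)) :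
    G.ReachableAvoiding F' x y := by
  refine reflTransGen_closed (fun a b ⟨e, heF, hab⟩ => ?_) _ _ h
  by_cases he : e ∈ F'
  · exact hab.reachableAvoiding_iff.1 (hF' e ⟨he, heF⟩)
  · exact .single ⟨e, he, hab⟩

theorem Connected.connectedAvoiding_iff (hc : G.Connected) :
    G.ConnectedAvoiding F ↔ ∀ e ∈ F, G.ReachableAvoiding F (G.s e) (G.t e) := by
  refine ⟨fun h e _ => h _ _, fun h a b => ?_⟩
  have hab : G.ReachableAvoiding ∅ a b :=
    ReflTransGen.mono (fun _ _ ⟨e, he⟩ => ⟨e, Set.notMem_empty e, he⟩) _ _ (hc.2 a b)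
  exact hab.of_forall_mem_diff fun e he => h e he.1

section Cycles

variable {n : ℕ} {c : Fin n → G.E} {v : Fin (n + 1) → G.V} {C : Finset G.E}

theorem IsPath.edge_injective (h : G.IsPath c v) : Injective c := by
  intro i j hij
  have hends := (h.2 i).sym2_eq (hij ▸ h.2 j)
  simp only [Sym2.eq_iff, h.1.eq_iff, Fin.ext_iff, val_castSucc, val_succ] at hends
  omega

theorem IsPath.isCycle_insert (h : G.IsPath c v) (he : G.Joins e (v (last n)) (v 0))
    (hec : e ∉ Set.range c) : G.IsCycle (insert e (Finset.univ.image c)) := by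
  refine ⟨n + 1, n.succ_pos, snoc c e, snoc v (v 0), snoc_injective_iff.2 ⟨h.edge_injective, hec⟩,
    fun i => ?_, ?_, fun i j hij => ?_, ?_⟩
  · change G.Joins _ _ _
    cases i using lastCases with
    | last => simpa using he
    | cast i => simpa [← castSucc_succ] using h.2 i
  · simp
  · cases i using lastCases <;> cases j using lastCases <;>
      simp_all [h.1.eq_iff, eq_comm]
  · ext g
    simp [exists_fin_succ', or_comm, eq_comm]

theorem ReachableAvoiding.exists_isPath (h : G.ReachableAvoiding F x y) :
    ∃ (n : ℕ) (c : Fin n → G.E) (v : Fin (n + 1) → G.V),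
      G.IsPath c v ∧ v 0 = x ∧ v (last n) = y ∧ ∀ i, c i ∉ F := by
  rw [ReachableAvoiding,
    ← SimpleGraph.reachable_fromEdgeSet_fromRel_eq_reflTransGen inferInstance] at h
  obtain ⟨p, hp⟩ := h.exists_isPath
  have hadj (i : Fin p.length) : G.AdjAvoiding F (p.getVert i) (p.getVert (i + 1)) :=
    ((SimpleGraph.fromEdgeSet_adj _).1 (p.adj_getVert_succ i.2)).1
  choose c hcF hjoin using hadj
  have hinj : Injective fun i : Fin (p.length + 1) => p.getVert i := fun i j hij =>
    Fin.ext (hp.getVert_injOn i.is_le j.is_le hij)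
  exact ⟨p.length, c, fun i => p.getVert i, ⟨hinj, hjoin⟩, by simp, by simp, hcF⟩

theorem IsCycle.reachableAvoiding (hC : G.IsCycle C) (hCF : ↑C ∩ F ⊆ {e}) (he : e ∈ C) :
    G.ReachableAvoiding F (G.s e) (G.t e) := by
  obtain ⟨n, -, c, v, hinj, hjoin, hclosed, -, rfl⟩ := hC
  obtain ⟨i, -, rfl⟩ := Finset.mem_image.1 he
  have hadj : ∀ j ≠ i, G.AdjAvoiding F (v j.castSucc) (v j.succ) := fun j hj =>
    ⟨c j, fun hjF => hj (hinj (hCF ⟨by simp, hjF⟩)), hjoin j⟩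
  exact (Joins.symm (hjoin i)).reachableAvoiding_iff.2
    (reflTransGen_succ_castSucc_of_closed hclosed hadj)

theorem ReachableAvoiding.exists_isCycle (h : G.ReachableAvoiding F (G.s e) (G.t e))
    (he : e ∈ F) : ∃ C : Finset G.E, G.IsCycle C ∧ ↑C ∩ F = {e} := by
  obtain ⟨n, c, v, hpath, hx, hy, hcF⟩ := h.exists_isPath
  refine ⟨_, hpath.isCycle_insert (e := e) ?_ ?_, ?_⟩
  · rw [hx, hy]
    exact (joins_s_t e).symm
  · rintro ⟨i, rfl⟩
    exact hcF i he
  · ext g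
    simp only [Finset.coe_insert, Finset.coe_image, Finset.coe_univ, Set.image_univ]
    grind

theorem exists_isCycle_inter_eq_singleton_iff (he : e ∈ F) :
    (∃ C : Finset G.E, G.IsCycle C ∧ ↑C ∩ F = {e}) ↔ G.ReachableAvoiding F (G.s e) (G.t e) := by
  refine ⟨fun ⟨C, hC, hCF⟩ => ?_, fun h => h.exists_isCycle he⟩
  exact hC.reachableAvoiding hCF.subset (hCF.ge rfl).1

theorem not_isBridge_iff_reachableAvoiding :
    ¬ G.IsBridge e ↔ G.ReachableAvoiding {e} (G.s e) (G.t e) := by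
  simp [← exists_isCycle_inter_eq_singleton_iff (Set.mem_singleton e), IsBridge]

end Cycles

theorem Connected.connectedAvoiding_pair_of_isCycle (hc : G.Connected) (hfb : ¬ G.IsBridge f)
    {C : Finset G.E} (hC : G.IsCycle C) (heC : e ∈ C) (hfC : f ∉ C) :
    G.ConnectedAvoiding {e, f} := by
  have he : G.ReachableAvoiding {e, f} (G.s e) (G.t e) := by
    refine hC.reachableAvoiding ?_ heC
    rintro g ⟨hgC, rfl | rfl⟩
    exacts [rfl, absurd hgC hfC]
  have hf : G.ReachableAvoiding {e, f} (G.s f) (G.t f) := by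
    refine (not_isBridge_iff_reachableAvoiding.1 hfb).of_forall_mem_diff ?_
    rintro g ⟨rfl | rfl, hg⟩
    exacts [he, absurd rfl hg]
  rw [hc.connectedAvoiding_iff]
  rintro g (rfl | rfl)
  exacts [he, hf]

theorem Sim.eq_of_connectedAvoiding_pair (hsim : G.Sim e f) (h : G.ConnectedAvoiding {e, f}) :
    e = f := by
  obtain ⟨C, hC, hCef⟩ :=
    (exists_isCycle_inter_eq_singleton_iff (Set.mem_insert e {f})).2 (h (G.s e) (G.t e))
  have heC : e ∈ C := (hCef.ge rfl).1
  exact (hCef.subset ⟨(hsim C hC).1 heC, .inr rfl⟩).symm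

theorem Connected.connectedAvoiding_pair_iff (hc : G.Connected) (hb : G.Bridgeless) :
    G.ConnectedAvoiding {e, f} ↔ (G.Sim e f → e = f) := by
  refine ⟨fun h hsim => hsim.eq_of_connectedAvoiding_pair h, fun h => ?_⟩
  by_cases hsim : G.Sim e f
  · obtain rfl := h hsim
    rw [Set.pair_eq_singleton, hc.connectedAvoiding_iff]
    rintro g rfl
    exact not_isBridge_iff_reachableAvoiding.1 (hb g)
  · obtain ⟨C, hC, hCef⟩ : ∃ C, G.IsCycle C ∧ ¬ (e ∈ C ↔ f ∈ C) := by simpa [Sim] using hsim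
    obtain ⟨heC, hfC⟩ | ⟨hfC, heC⟩ := (xor_iff_not_iff _ _).2 hCef
    · exact hc.connectedAvoiding_pair_of_isCycle (hb f) hC heC hfC
    · rw [Set.pair_comm]
      exact hc.connectedAvoiding_pair_of_isCycle (hb e) hC hfC heC

theorem Connected.forall_card_le_two_connectedAvoiding_iff (hc : G.Connected) :
    (∀ F : Finset G.E, F.card ≤ 2 → G.ConnectedAvoiding ↑F) ↔
      ∀ e f : G.E, G.ConnectedAvoiding {e, f} := by
  refine ⟨fun h e f => by simpa using h {e, f} Finset.card_le_two, fun h F hF => ?_⟩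
  obtain hF | hF | hF : F.card = 0 ∨ F.card = 1 ∨ F.card = 2 := by omega
  · obtain rfl := Finset.card_eq_zero.1 hF
    simp [hc.connectedAvoiding_iff]
  · obtain ⟨e, rfl⟩ := Finset.card_eq_one.1 hF
    simpa using h e e
  · obtain ⟨e, f, -, rfl⟩ := Finset.card_eq_two.1 hF
    simpa using h e f

theorem forall_isC1Set_ncard_eq_one_iff :
    (∀ S : Set G.E, G.IsC1Set S → S.ncard = 1) ↔ ∀ e f : G.E, G.Sim e f → e = f := by
  constructor
  · intro h e f hsim
    obtain ⟨a, ha⟩ := Set.ncard_eq_one.1 (h _ ⟨e, rfl⟩)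
    have he : e = a := ha.subset fun _ _ => Iff.rfl
    have hf : f = a := ha.subset hsim
    exact he.trans hf.symm
  · rintro h _ ⟨e, rfl⟩
    exact Set.ncard_eq_one.2 ⟨e, Set.eq_singleton_iff_unique_mem.2
      ⟨fun _ _ => Iff.rfl, fun f hsim => (h e f hsim).symm⟩⟩

end Multigraph

/-- A connected bridgeless multigraph is 3-edge-connected (removal of any
set of at most two edges leaves it connected) if and only if every C1-set has
cardinality 1. -/
theorem three_edge_connected_iff_c1_singletons (G : Multigraph) (hc : G.Connected)
    (hb : G.Bridgeless) :
    (∀ F : Finset G.E, F.card ≤ 2 → G.ConnectedAvoiding ↑F) ↔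
    (∀ S : Set G.E, G.IsC1Set S → S.ncard = 1) := by
  rw [hc.forall_card_le_two_connectedAvoiding_iff, Multigraph.forall_isC1Set_ncard_eq_one_iff]
  exact forall₂_congr fun _ _ => hc.connectedAvoiding_pair_iff hb
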